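/- Let (f_n)_{n∈ℕ} be a Lipschitz p-Bessel sequence for the pointed metric space (M, 0) with bound b and let (τ_n)_{n∈ℕ} be a q-Bessel sequence in the Banach space X with bound c. If (λ_n)_{n∈ℕ} is a scalar sequence with λ_n → 0, then the multiplier M_{λ,f,τ} : M → X, M_{λ,f,τ} x := ∑_{n=1}^∞ λ_n f_n(x) τ_n, is a Lipschitz compact operator: the set {(1/d(x,y))·(M_{λ,f,τ} x − M_{λ,f,τ} y) : x, y ∈ M, x ≠ y} has compact closure in X. -/

import Mathlib

/-!
Dividing `T x - T y` by `dist x y` gives the value of the linear multiplier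
`a ↦ ∑ i, (lam i * a i) • τ i` at the point `a i = (f i x - f i y) / dist x y` of the ball of
radius `b` in `ℓᵖ`, so it is enough that this linear multiplier maps balls to totally bounded sets.
Hölder's inequality, tested against functionals, shows that the terms outside a finite set `s`
contribute at most `sup_{i ∉ s} ‖lam i‖` times a constant; as `lam` vanishes at infinity, the
multiplier is a uniform limit of its finite partial sums, each of which has totally bounded range
on a ball.
-/

open Filter Topology

section TotallyBounded

theorem totallyBounded_of_forall_exists_dist_le {α : Type*} [PseudoMetricSpace α] {s : Set α}
    (h : ∀ ε > 0, ∃ t : Set α, TotallyBounded t ∧ ∀ x ∈ s, ∃ y ∈ t, dist x y ≤ ε) :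
    TotallyBounded s := by
  refine Metric.totallyBounded_iff.2 fun ε hε => ?_
  obtain ⟨t, ht, hst⟩ := h (ε / 2) (half_pos hε)
  obtain ⟨u, hu, htu⟩ := Metric.totallyBounded_iff.1 ht (ε / 2) (half_pos hε)
  refine ⟨u, hu, fun x hx => ?_⟩
  obtain ⟨y, hy, hxy⟩ := hst x hx
  obtain ⟨w, hw, hyw⟩ := Set.mem_iUnion₂.1 (htu hy)
  refine Set.mem_iUnion₂.2 ⟨w, hw, Metric.mem_ball.2 ?_⟩
  calc dist x w ≤ dist x y + dist y w := dist_triangle x y w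
    _ < ε / 2 + ε / 2 := add_lt_add_of_le_of_lt hxy hyw
    _ = ε := add_halves ε

theorem totallyBounded_image_sum_smul {𝕂 X ι : Type*} [NormedField 𝕂] [ProperSpace 𝕂]
    [SeminormedAddCommGroup X] [NormedSpace 𝕂 X] (s : Finset ι) (v : ι → X) (R : ℝ) :
    TotallyBounded ((fun a : ι → 𝕂 => ∑ i ∈ s, a i • v i) '' {a | ∀ i, ‖a i‖ ≤ R}) := by
  have hcompact : IsCompact {a : ι → 𝕂 | ∀ i, a i ∈ Metric.closedBall 0 R} :=
    isCompact_pi_infinite fun _ => isCompact_closedBall 0 R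
  simp only [mem_closedBall_zero_iff] at hcompact
  exact (hcompact.image (by fun_prop)).totallyBounded

end TotallyBounded

section LpBall

variable {ι E : Type*} [SeminormedAddCommGroup E] {p A : ℝ} {a : ι → E}

/-- The closed ball of radius `A` in `ℓᵖ(ι, E)`. Bounding the finite partial sums of `‖a i‖ ^ p`
encodes summability and the bound on the sum at once. -/
def lpBall (p A : ℝ) : Set (ι → E) :=
  {a | ∀ s : Finset ι, ∑ i ∈ s, ‖a i‖ ^ p ≤ A ^ p}

theorem mem_lpBall_of_tsum_le (ha : Summable fun i => ‖a i‖ ^ p)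
    (hA : ∑' i, ‖a i‖ ^ p ≤ A ^ p) : a ∈ lpBall p A := fun s =>
  (ha.sum_le_tsum s fun _ _ => Real.rpow_nonneg (norm_nonneg _) p).trans hA

theorem norm_le_of_mem_lpBall (hp : 0 < p) (hA : 0 ≤ A) (ha : a ∈ lpBall p A) (i : ι) :
    ‖a i‖ ≤ A := by
  rw [← Real.rpow_le_rpow_iff (norm_nonneg _) hA hp]
  simpa only [Finset.sum_singleton] using ha {i}

theorem sum_norm_mul_norm_le_of_sum_rpow_le {F : Type*} [SeminormedAddCommGroup F] {q B : ℝ}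
    {y : ι → F} {s : Finset ι} (hpq : p.HolderConjugate q) (hA : 0 ≤ A) (hB : 0 ≤ B)
    (ha : ∑ i ∈ s, ‖a i‖ ^ p ≤ A ^ p) (hy : ∑ i ∈ s, ‖y i‖ ^ q ≤ B ^ q) :
    ∑ i ∈ s, ‖a i‖ * ‖y i‖ ≤ A * B := by
  have ha' : (∑ i ∈ s, ‖a i‖ ^ p) ^ p⁻¹ ≤ A :=
    (Real.rpow_inv_le_iff_of_pos (by positivity) hA hpq.pos).2 ha
  have hy' : (∑ i ∈ s, ‖y i‖ ^ q) ^ q⁻¹ ≤ B :=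
    (Real.rpow_inv_le_iff_of_pos (by positivity) hB hpq.symm.pos).2 hy
  calc ∑ i ∈ s, ‖a i‖ * ‖y i‖
      ≤ (∑ i ∈ s, ‖a i‖ ^ p) ^ p⁻¹ * (∑ i ∈ s, ‖y i‖ ^ q) ^ q⁻¹ := by
        simpa only [one_div] using Real.inner_le_Lp_mul_Lq_of_nonneg s hpq
          (fun i _ => norm_nonneg (a i)) (fun i _ => norm_nonneg (y i))
    _ ≤ A * B := by gcongr

theorem sum_rpow_norm_mul_le {R : Type*} [SeminormedRing R] {m u : ι → R} {δ : ℝ} {s : Finset ι}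
    (hp : 0 ≤ p) (hδ : 0 ≤ δ) (hA : 0 ≤ A) (hm : ∀ i ∈ s, ‖m i‖ ≤ δ)
    (hu : ∑ i ∈ s, ‖u i‖ ^ p ≤ A ^ p) : ∑ i ∈ s, ‖m i * u i‖ ^ p ≤ (δ * A) ^ p := by
  have hterm : ∀ i ∈ s, ‖m i * u i‖ ^ p ≤ δ ^ p * ‖u i‖ ^ p := fun i hi => by
    rw [← Real.mul_rpow hδ (norm_nonneg _)]
    exact Real.rpow_le_rpow (norm_nonneg _) (norm_mul_le_of_le (hm i hi) le_rfl) hp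
  calc ∑ i ∈ s, ‖m i * u i‖ ^ p ≤ δ ^ p * ∑ i ∈ s, ‖u i‖ ^ p := by
        rw [Finset.mul_sum]
        exact Finset.sum_le_sum hterm
    _ ≤ δ ^ p * A ^ p := by gcongr
    _ = (δ * A) ^ p := (Real.mul_rpow hδ hA).symm

end LpBall

section Bessel

variable {𝕂 X ι : Type*} [RCLike 𝕂] [SeminormedAddCommGroup X] [NormedSpace 𝕂 X]
  {p q A c : ℝ} {τ : ι → X}

variable (𝕂) in
/-- `τ` is a `q`-Bessel family with bound `c`: every functional `F` sends it into the ball of radius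
`c * ‖F‖` in `ℓ^q`. -/
def IsBessel (q c : ℝ) (τ : ι → X) : Prop :=
  ∀ F : StrongDual 𝕂 X, (fun i => F (τ i)) ∈ lpBall q (c * ‖F‖)

theorem isBessel_of_tsum_le (hc : 0 ≤ c)
    (hτ : ∀ F : StrongDual 𝕂 X, Summable (fun i => ‖F (τ i)‖ ^ q) ∧
      ∑' i, ‖F (τ i)‖ ^ q ≤ c ^ q * ‖F‖ ^ q) : IsBessel 𝕂 q c τ := fun F =>
  mem_lpBall_of_tsum_le (hτ F).1 ((hτ F).2.trans_eq (Real.mul_rpow hc (norm_nonneg F)).symm)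

theorem IsBessel.norm_sum_smul_le (hτ : IsBessel 𝕂 q c τ) (hpq : p.HolderConjugate q)
    (hA : 0 ≤ A) (hc : 0 ≤ c) {a : ι → 𝕂} {s : Finset ι} (ha : ∑ i ∈ s, ‖a i‖ ^ p ≤ A ^ p) :
    ‖∑ i ∈ s, a i • τ i‖ ≤ A * c := by
  refine NormedSpace.norm_le_dual_bound 𝕂 _ (mul_nonneg hA hc) fun F => ?_
  calc ‖F (∑ i ∈ s, a i • τ i)‖ = ‖∑ i ∈ s, a i * F (τ i)‖ := by
        simp only [map_sum, map_smul, smul_eq_mul]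
    _ ≤ ∑ i ∈ s, ‖a i‖ * ‖F (τ i)‖ := norm_sum_le_of_le s fun i _ => norm_mul_le _ _
    _ ≤ A * (c * ‖F‖) := sum_norm_mul_norm_le_of_sum_rpow_le hpq hA
        (mul_nonneg hc (norm_nonneg F)) ha (hτ F s)
    _ = A * c * ‖F‖ := (mul_assoc _ _ _).symm

theorem IsBessel.dist_sum_smul_le_of_hasSum (hτ : IsBessel 𝕂 q c τ) (hpq : p.HolderConjugate q)
    (hA : 0 ≤ A) (hc : 0 ≤ c) {L : SummationFilter ι} [L.LeAtTop] [L.NeBot] {lam a : ι → 𝕂}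
    {δ : ℝ} (hδ : 0 ≤ δ) {s : Finset ι} (hlam : ∀ i ∉ s, ‖lam i‖ ≤ δ) (ha : a ∈ lpBall p A)
    {z : X} (hz : HasSum (fun i => (lam i * a i) • τ i) z L) :
    dist z (∑ i ∈ s, (lam i * a i) • τ i) ≤ δ * A * c := by
  classical
  refine le_of_tendsto (hz.dist tendsto_const_nhds) ?_
  filter_upwards [L.le_atTop (eventually_ge_atTop s)] with t hst
  rw [dist_eq_norm, ← Finset.sum_sdiff_eq_sub hst]
  exact hτ.norm_sum_smul_le hpq (mul_nonneg hδ hA) hc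
    (sum_rpow_norm_mul_le hpq.nonneg hδ hA (fun i hi => hlam i (Finset.mem_sdiff.1 hi).2) (ha _))

/-- The image of the ball of radius `A` in `ℓᵖ` under the linear multiplier
`a ↦ ∑ i, (lam i * a i) • τ i`, the series being summed along `L`. -/
def multiplierImage (L : SummationFilter ι) (p A : ℝ) (lam : ι → 𝕂) (τ : ι → X) : Set X :=
  {z | ∃ a ∈ lpBall p A, HasSum (fun i => (lam i * a i) • τ i) z L}

theorem totallyBounded_multiplierImage {L : SummationFilter ι} [L.LeAtTop] [L.NeBot]
    (hτ : IsBessel 𝕂 q c τ) (hpq : p.HolderConjugate q) (hA : 0 ≤ A) (hc : 0 ≤ c)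
    {lam : ι → 𝕂} (hlam : Tendsto lam cofinite (𝓝 0)) :
    TotallyBounded (multiplierImage L p A lam τ) := by
  refine totallyBounded_of_forall_exists_dist_le fun ε hε => ?_
  obtain ⟨δ, hδ, hδε⟩ : ∃ δ > 0, δ * (A * c) < ε := by
    simpa only [mul_comm] using exists_pos_mul_lt hε (A * c)
  have hlarge : {i | ¬‖lam i‖ ≤ δ}.Finite :=
    hlam.norm.eventually_le_const (by simpa only [norm_zero] using hδ)
  refine ⟨_, totallyBounded_image_sum_smul (𝕂 := 𝕂) hlarge.toFinset (fun i => lam i • τ i) A, ?_⟩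
  rintro z ⟨a, ha, hz⟩
  refine ⟨_, ⟨a, norm_le_of_mem_lpBall hpq.pos hA ha, rfl⟩, ?_⟩
  simp only [smul_smul, mul_comm (a _)]
  refine (hτ.dist_sum_smul_le_of_hasSum hpq hA hc hδ.le (fun i hi => ?_) ha hz).trans ?_
  · simpa only [Set.Finite.mem_toFinset, Set.mem_ofPred_eq, not_not] using hi
  · simpa only [mul_assoc] using hδε.le

end Bessel

section LipschitzMultiplier

variable {ι : Type*} {p b : ℝ}

section IsLipschitzBessel

variable {E M : Type*} [SeminormedAddCommGroup E] [PseudoMetricSpace M]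

/-- `f` is a Lipschitz `p`-Bessel family with bound `b`: all increments `(f i x - f i y)ᵢ` lie in
the ball of radius `b * dist x y` in `ℓᵖ`. -/
def IsLipschitzBessel (p b : ℝ) (f : ι → M → E) : Prop :=
  ∀ x y : M, (fun i => f i x - f i y) ∈ lpBall p (b * dist x y)

theorem isLipschitzBessel_of_tsum_le {f : ι → M → E} (hb : 0 ≤ b)
    (hf : ∀ x y : M, Summable (fun i => ‖f i x - f i y‖ ^ p) ∧
      ∑' i, ‖f i x - f i y‖ ^ p ≤ b ^ p * dist x y ^ p) : IsLipschitzBessel p b f := fun x y =>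
  mem_lpBall_of_tsum_le (hf x y).1 ((hf x y).2.trans_eq (Real.mul_rpow hb dist_nonneg).symm)

theorem IsLipschitzBessel.inv_dist_mul_sub_mem_lpBall {𝕂 : Type*} [RCLike 𝕂]
    {f : ι → M → 𝕂} (hf : IsLipschitzBessel p b f) (hp : 0 ≤ p) (hb : 0 ≤ b) {x y : M}
    (hxy : dist x y ≠ 0) :
    (fun i => (((dist x y)⁻¹ : ℝ) : 𝕂) * (f i x - f i y)) ∈ lpBall p b := by
  intro s
  have hnorm : ‖(((dist x y)⁻¹ : ℝ) : 𝕂)‖ ≤ (dist x y)⁻¹ :=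
    (RCLike.norm_of_nonneg (inv_nonneg.2 dist_nonneg)).le
  have hscaled := sum_rpow_norm_mul_le hp (inv_nonneg.2 dist_nonneg)
    (mul_nonneg hb dist_nonneg) (fun _ _ => hnorm) (hf x y s)
  rwa [mul_comm b, inv_mul_cancel_left₀ hxy] at hscaled

end IsLipschitzBessel

variable {𝕂 X M : Type*} [RCLike 𝕂] [MetricSpace M] [SeminormedAddCommGroup X] [NormedSpace 𝕂 X]

variable (𝕂) in
/-- The set of difference quotients of `T`, whose relative compactness is what makes `T` Lipschitz
compact. -/
def lipschitzImage (T : M → X) : Set X :=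
  {z : X | ∃ x y : M, x ≠ y ∧ z = (((dist x y)⁻¹ : ℝ) : 𝕂) • (T x - T y)}

theorem lipschitzImage_subset_multiplierImage {L : SummationFilter ι}
    {f : ι → M → 𝕂} (hf : IsLipschitzBessel p b f) (hp : 0 ≤ p) (hb : 0 ≤ b) {lam : ι → 𝕂}
    {τ : ι → X} {T : M → X} (hT : ∀ x, HasSum (fun i => (lam i * f i x) • τ i) (T x) L) :
    lipschitzImage 𝕂 T ⊆ multiplierImage L p b lam τ := by
  rintro _ ⟨x, y, hxy, rfl⟩
  refine ⟨_, hf.inv_dist_mul_sub_mem_lpBall hp hb (dist_ne_zero.2 hxy), ?_⟩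
  have hdiff := ((hT x).sub (hT y)).const_smul (((dist x y)⁻¹ : ℝ) : 𝕂)
  simpa only [← sub_smul, ← mul_sub, smul_smul, mul_left_comm] using hdiff

theorem multiplier_c0_symbol_lipschitz_compact_general {L : SummationFilter ι} [L.LeAtTop]
    [L.NeBot] {q c : ℝ} (hpq : p.HolderConjugate q) (hb : 0 ≤ b) (hc : 0 ≤ c)
    {f : ι → M → 𝕂} (hf : IsLipschitzBessel p b f) {τ : ι → X} (hτ : IsBessel 𝕂 q c τ)
    {lam : ι → 𝕂} (hlam : Tendsto lam cofinite (𝓝 0)) {T : M → X}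
    (hT : ∀ x, HasSum (fun i => (lam i * f i x) • τ i) (T x) L) :
    TotallyBounded (lipschitzImage 𝕂 T) :=
  (totallyBounded_multiplierImage hτ hpq hb hc hlam).subset
    (lipschitzImage_subset_multiplierImage hf hpq.nonneg hb hT)

end LipschitzMultiplier

theorem hasSum_conditional_nat_iff {X : Type*} [AddCommMonoid X] [TopologicalSpace X] {g : ℕ → X}
    {z : X} : HasSum g z (SummationFilter.conditional ℕ) ↔
      Tendsto (fun N => ∑ n ∈ Finset.range N, g n) atTop (𝓝 z) := by
  rw [HasSum, SummationFilter.conditional_filter_eq_map_range, tendsto_map'_iff]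
  rfl

/-- **Multipliers with `c₀` symbol are Lipschitz compact**: if `(f_n)` is a Lipschitz p-Bessel
sequence for the pointed metric space `(M, base)` with bound `b`, `(τ_n)` a q-Bessel sequence in
the Banach space `X` with bound `c`, `λ_n → 0`, and `T` is the multiplier
`T x = ∑ λ_n f_n(x) τ_n`, then the Lipschitz image
`{(1/d(x,y)) • (T x - T y) : x ≠ y}` has compact closure in `X`. -/
theorem multiplier_c0_symbol_lipschitz_compact
    {𝕂 X M : Type*} [RCLike 𝕂] [NormedAddCommGroup X] [NormedSpace 𝕂 X] [CompleteSpace X]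
    [MetricSpace M] (base : M)
    (p q : ℝ) (hp : 1 < p) (hpq : 1 / p + 1 / q = 1)
    (f : ℕ → M → 𝕂) (b : ℝ) (hb : 0 < b)
    (hlip : ∀ n, ∃ K, LipschitzWith K (f n)) (hf0 : ∀ n, f n base = 0)
    (hfb : ∀ x y : M, Summable (fun n => ‖f n x - f n y‖ ^ p) ∧
      ∑' n, ‖f n x - f n y‖ ^ p ≤ b ^ p * dist x y ^ p)
    (τ : ℕ → X) (c : ℝ) (hc : 0 < c)
    (hτ : ∀ F : X →L[𝕂] 𝕂, Summable (fun n => ‖F (τ n)‖ ^ q) ∧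
      ∑' n, ‖F (τ n)‖ ^ q ≤ c ^ q * ‖F‖ ^ q)
    (lam : ℕ → 𝕂) (hlam : Filter.Tendsto lam Filter.atTop (nhds 0))
    (T : M → X)
    (hT : ∀ x : M, Filter.Tendsto (fun N => ∑ n ∈ Finset.range N, (lam n * f n x) • τ n)
      Filter.atTop (nhds (T x))) :
    IsCompact (closure
      {z : X | ∃ x y : M, x ≠ y ∧ z = (((dist x y)⁻¹ : ℝ) : 𝕂) • (T x - T y)}) := by
  have hpq' : p.HolderConjugate q :=
    Real.holderConjugate_iff.2 ⟨hp, by simpa only [one_div] using hpq⟩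
  have hbounded : TotallyBounded (lipschitzImage 𝕂 T) :=
    multiplier_c0_symbol_lipschitz_compact_general hpq' hb.le hc.le
      (isLipschitzBessel_of_tsum_le hb.le hfb) (isBessel_of_tsum_le hc.le hτ)
      (Nat.cofinite_eq_atTop ▸ hlam) fun x => hasSum_conditional_nat_iff.2 (hT x)
  exact hbounded.closure.isCompact_of_isClosed isClosed_closure
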